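/- Let $\Omega \subset \mathbb{R}^N$ be a bounded domain, $\alpha, \beta \in (0,1)$, $T > 0$, and let $u(x,t)$ be $C^2$ in $x$ and $C^1$ in $t$ on $\Omega \times (0,T)$, continuous on $\bar{\Omega} \times [0,T]$, with $u = 0$ in $\mathbb{R}^N \setminus \Omega$ for all $t \geq 0$. If $u$ satisfies $\partial_t^\alpha(u - u_0) + (-\Delta)^\beta u = f$ in $\Omega \times (0,T)$ with $f \geq 0$ in $\bar{\Omega} \times [0,T]$, $u(\cdot,0) = u_0 \geq 0$ in $\Omega$, then $u \geq 0$ in $\bar{\Omega} \times [0,T]$. -/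

import Mathlib

open MeasureTheory Set

noncomputable section

/-- Laplace convolution on `[0,t]`. -/
def tconv (k u : ℝ → ℝ) (t : ℝ) : ℝ := ∫ s in Set.Ioc 0 t, k (t - s) * u s

/-- Riemann–Liouville fractional derivative of order `α`. -/
def riemannLiouville (α : ℝ) (v : ℝ → ℝ) (t : ℝ) : ℝ :=
  deriv (tconv (fun s => s ^ (-α) / Real.Gamma (1 - α)) v) t

/-- The normalizing constant `c_{N,β}` of the fractional Laplacian. -/
def fracLapConst (N : ℕ) (β : ℝ) : ℝ :=
  β * 2 ^ (2 * β) * Real.Gamma ((N + 2 * β) / 2) /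
    (Real.pi ^ ((N : ℝ) / 2) * Real.Gamma (1 - β))

/-- The fractional Laplacian `(-Δ)^β`. -/
def fracLap (N : ℕ) (β : ℝ) (v : EuclideanSpace ℝ (Fin N) → ℝ)
    (x : EuclideanSpace ℝ (Fin N)) : ℝ :=
  fracLapConst N β * ∫ y, (v x - v y) / ‖x - y‖ ^ ((N : ℝ) + 2 * β)

/-! If `u` is negative somewhere, its minimum over `ℝᴺ × [0, S]`, with `S < T`, is attained at some
`(x₀, t₀)` with `x₀ ∈ Ω` and `0 < t₀`. There the Riemann–Liouville derivative of `u(x₀, ·) - u₀(x₀)`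
is `≤ 0`, because the kernel is nonnegative and decreasing, and `(-Δ)^β u(·, t₀)` is `< 0`, because
`u(x₀, t₀)` lies strictly below the exterior value `0`. So the left-hand side of the equation is
negative. The time `T`, at which no equation is assumed, is reached by continuity. -/

open Filter Topology Asymptotics

section TimeConvolution

variable {k v : ℝ → ℝ} {r t : ℝ}

lemma tconv_eq_intervalIntegral (k v : ℝ → ℝ) (ht : 0 ≤ t) :
    tconv k v t = ∫ s in (0 : ℝ)..t, k (t - s) * v s :=
  (intervalIntegral.integral_of_le ht).symm

lemma intervalIntegrable_reflect (hk : IntervalIntegrable k volume 0 t) :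
    IntervalIntegrable (fun s => k (t - s)) volume 0 t := by
  simpa using (hk.comp_sub_left t).symm

lemma intervalIntegrable_tconv_integrand (ht : 0 ≤ t) (hk : IntervalIntegrable k volume 0 t)
    (hv : ContinuousOn v (Icc 0 t)) :
    IntervalIntegrable (fun s => k (t - s) * v s) volume 0 t :=
  (intervalIntegrable_reflect hk).mul_continuousOn (by rwa [uIcc_of_le ht])

lemma tconv_eq_tconv_sub_const_add (c : ℝ) (ht : 0 ≤ t) (hk : IntervalIntegrable k volume 0 t)
    (hv : ContinuousOn v (Icc 0 t)) :
    tconv k v t = tconv k (fun s => v s - c) t + c * ∫ s in (0 : ℝ)..t, k s := by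
  have hreflect : ∫ s in (0 : ℝ)..t, k (t - s) = ∫ s in (0 : ℝ)..t, k s := by simp
  rw [← hreflect, tconv_eq_intervalIntegral k v ht, tconv_eq_intervalIntegral k _ ht,
    ← intervalIntegral.integral_const_mul, ← intervalIntegral.integral_add
      (intervalIntegrable_tconv_integrand ht hk (hv.fun_sub continuousOn_const))
      ((intervalIntegrable_reflect hk).const_mul c)]
  exact intervalIntegral.integral_congr fun s _ => by ring

lemma tconv_sub_tconv_le_of_nonneg {w : ℝ → ℝ} (hr : 0 ≤ r) (hrt : r ≤ t)
    (hk : IntervalIntegrable k volume 0 t) (hk_anti : AntitoneOn k (Ioi 0))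
    (hw : ContinuousOn w (Icc 0 t)) (hw_nonneg : ∀ s ∈ Ioo 0 r, 0 ≤ w s) :
    tconv k w t - tconv k w r ≤ ∫ s in r..t, k (t - s) * w s := by
  have ht : 0 ≤ t := hr.trans hrt
  have hr_mem : r ∈ uIcc 0 t := by rw [uIcc_of_le ht]; exact ⟨hr, hrt⟩
  have hint_t := intervalIntegrable_tconv_integrand ht hk hw
  have hint_left := hint_t.mono_set (uIcc_subset_uIcc_left hr_mem)
  have hint_right := hint_t.mono_set (uIcc_subset_uIcc_right hr_mem)
  have hint_r := intervalIntegrable_tconv_integrand hr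
    (hk.mono_set (uIcc_subset_uIcc_left hr_mem)) (hw.mono (Icc_subset_Icc_right hrt))
  have hle : ∫ s in (0 : ℝ)..r, k (t - s) * w s ≤ ∫ s in (0 : ℝ)..r, k (r - s) * w s := by
    refine intervalIntegral.integral_mono_on_of_le_Ioo hr hint_left hint_r fun s hs => ?_
    have hk_le : k (t - s) ≤ k (r - s) :=
      hk_anti (sub_pos.2 hs.2) (sub_pos.2 (hs.2.trans_le hrt)) (by linarith)
    exact mul_le_mul_of_nonneg_right hk_le (hw_nonneg s hs)
  rw [tconv_eq_intervalIntegral k w ht, tconv_eq_intervalIntegral k w hr,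
    ← intervalIntegral.integral_add_adjacent_intervals hint_left hint_right]
  linarith

/- Write `v = v t + w` with `w ≥ 0`: since `k` decreases, the past of `w` contributes nothing
positive to the increment, and `v t ≤ 0` multiplies the increasing function `t ↦ ∫₀ᵗ k`. -/
lemma tconv_sub_tconv_le_of_isMin (hr : 0 ≤ r) (hrt : r ≤ t)
    (hk : IntervalIntegrable k volume 0 t) (hk_nonneg : ∀ s ∈ Ioi 0, 0 ≤ k s)
    (hk_anti : AntitoneOn k (Ioi 0)) (hv : ContinuousOn v (Icc 0 t))
    (hmin : ∀ s ∈ Icc 0 t, v t ≤ v s) (hvt : v t ≤ 0) :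
    tconv k v t - tconv k v r ≤ ∫ s in r..t, k (t - s) * (v s - v t) := by
  have hr_mem : r ∈ uIcc 0 t := by rw [uIcc_of_le (hr.trans hrt)]; exact ⟨hr, hrt⟩
  have hk_left := hk.mono_set (uIcc_subset_uIcc_left hr_mem)
  have hk_right := hk.mono_set (uIcc_subset_uIcc_right hr_mem)
  have hincr := tconv_sub_tconv_le_of_nonneg hr hrt hk hk_anti (hv.fun_sub continuousOn_const)
    fun s hs => sub_nonneg.2 (hmin s ⟨hs.1.le, hs.2.le.trans hrt⟩)
  have hmass : 0 ≤ ∫ s in r..t, k s := by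
    rw [intervalIntegral.integral_of_le hrt]
    exact setIntegral_nonneg measurableSet_Ioc fun s hs => hk_nonneg s (hr.trans_lt hs.1)
  rw [tconv_eq_tconv_sub_const_add (v t) (hr.trans hrt) hk hv,
    tconv_eq_tconv_sub_const_add (v t) hr hk_left (hv.mono (Icc_subset_Icc_right hrt)),
    ← intervalIntegral.integral_add_adjacent_intervals hk_left hk_right]
  nlinarith [mul_nonpos_of_nonpos_of_nonneg hvt hmass]

lemma integral_kernel_mul_le {w : ℝ → ℝ} {C : ℝ} (hr : 0 ≤ r) (hrt : r ≤ t)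
    (hk : IntervalIntegrable k volume 0 t) (hk_nonneg : ∀ s ∈ Ioi 0, 0 ≤ k s)
    (hw : ContinuousOn w (Icc 0 t)) (hwC : ∀ s ∈ Ioo r t, w s ≤ C) :
    ∫ s in r..t, k (t - s) * w s ≤ C * ∫ s in (0 : ℝ)..(t - r), k s := by
  have hr_mem : r ∈ uIcc 0 t := by rw [uIcc_of_le (hr.trans hrt)]; exact ⟨hr, hrt⟩
  have hsub := uIcc_subset_uIcc_right hr_mem
  calc ∫ s in r..t, k (t - s) * w s
      ≤ ∫ s in r..t, k (t - s) * C := by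
        refine intervalIntegral.integral_mono_on_of_le_Ioo hrt
          ((intervalIntegrable_tconv_integrand (hr.trans hrt) hk hw).mono_set hsub)
          (((intervalIntegrable_reflect hk).mono_set hsub).mul_const C) fun s hs => ?_
        exact mul_le_mul_of_nonneg_left (hwC s hs) (hk_nonneg _ (sub_pos.2 hs.2))
    _ = C * ∫ s in (0 : ℝ)..(t - r), k s := by
        rw [intervalIntegral.integral_mul_const, mul_comm]; simp

lemma tendsto_integral_sub_nhdsLT (ht : 0 < t) (hk : IntervalIntegrable k volume 0 t) :
    Tendsto (fun r => ∫ s in (0 : ℝ)..(t - r), k s) (𝓝[<] t) (𝓝 0) := by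
  have hprim : ContinuousWithinAt (fun h => ∫ s in (0 : ℝ)..h, k s) (Icc 0 t) 0 := by
    simpa [uIcc_of_le ht.le] using
      intervalIntegral.continuousOn_primitive_interval' hk left_mem_uIcc 0 left_mem_uIcc
  have hsub : Tendsto (fun r => t - r) (𝓝[<] t) (𝓝[Icc 0 t] 0) := by
    refine tendsto_nhdsWithin_iff.2 ⟨?_, ?_⟩
    · have : Continuous fun r => t - r := by fun_prop
      simpa using (this.tendsto t).mono_left nhdsWithin_le_nhds
    · filter_upwards [Ioo_mem_nhdsLT ht] with r hr
      exact ⟨sub_nonneg.2 hr.2.le, by linarith [hr.1]⟩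
  simpa [Function.comp_def] using hprim.tendsto.comp hsub

lemma deriv_nonpos_of_eventually_sub_le_mul {f ε : ℝ → ℝ} (hε : Tendsto ε (𝓝[<] t) (𝓝 0))
    (hle : ∀ᶠ r in 𝓝[<] t, f t - f r ≤ ε r * (t - r)) : deriv f t ≤ 0 := by
  by_cases hf : DifferentiableAt ℝ f t
  · refine le_of_tendsto_of_tendsto
      (hasDerivAt_iff_tendsto_slope_left_right.1 hf.hasDerivAt).1 hε ?_
    filter_upwards [hle, self_mem_nhdsWithin] with r hr hrt
    rw [slope_comm, slope_def_field, div_le_iff₀ (sub_pos.2 hrt)]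
    exact hr
  · exact (deriv_zero_of_not_differentiableAt hf).le

theorem deriv_tconv_nonpos_of_isMin (ht : 0 < t) (hk : IntervalIntegrable k volume 0 t)
    (hk_nonneg : ∀ s ∈ Ioi 0, 0 ≤ k s) (hk_anti : AntitoneOn k (Ioi 0))
    (hv : ContinuousOn v (Icc 0 t)) (hd : DifferentiableWithinAt ℝ v (Iio t) t)
    (hmin : ∀ s ∈ Icc 0 t, v t ≤ v s) (hvt : v t ≤ 0) :
    deriv (tconv k v) t ≤ 0 := by
  obtain ⟨C, hC_nonneg, hC⟩ := hd.isBigO_sub.exists_nonneg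
  obtain ⟨a, hat, ha⟩ := mem_nhdsLT_iff_exists_Ioo_subset.1 hC.bound
  refine deriv_nonpos_of_eventually_sub_le_mul
    (by simpa using (tendsto_integral_sub_nhdsLT ht hk).const_mul C) ?_
  filter_upwards [Ioo_mem_nhdsLT (max_lt ht hat)] with r ⟨hmax, hrt⟩
  obtain ⟨hr, har⟩ := max_lt_iff.1 hmax
  have hlip : ∀ s ∈ Ioo r t, v s - v t ≤ C * (t - r) := fun s hs => calc
    v s - v t ≤ C * ‖s - t‖ := (le_abs_self _).trans (ha ⟨har.trans hs.1, hs.2⟩)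
    _ ≤ C * (t - r) := by
      rw [Real.norm_of_nonpos (sub_nonpos.2 hs.2.le)]
      exact mul_le_mul_of_nonneg_left (by linarith [hs.1]) hC_nonneg
  calc tconv k v t - tconv k v r
      ≤ ∫ s in r..t, k (t - s) * (v s - v t) :=
        tconv_sub_tconv_le_of_isMin hr.le hrt.le hk hk_nonneg hk_anti hv hmin hvt
    _ ≤ C * (t - r) * ∫ s in (0 : ℝ)..(t - r), k s :=
        integral_kernel_mul_le hr.le hrt.le hk hk_nonneg (hv.fun_sub continuousOn_const) hlip
    _ = (C * ∫ s in (0 : ℝ)..(t - r), k s) * (t - r) := by ring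

theorem riemannLiouville_nonpos_of_isMin {α : ℝ} (hα : α ∈ Ico (0 : ℝ) 1) (ht : 0 < t)
    (hv : ContinuousOn v (Icc 0 t)) (hd : DifferentiableWithinAt ℝ v (Iio t) t)
    (hmin : ∀ s ∈ Icc 0 t, v t ≤ v s) (hvt : v t ≤ 0) :
    riemannLiouville α v t ≤ 0 := by
  have hΓ : 0 < Real.Gamma (1 - α) := Real.Gamma_pos_of_pos (sub_pos.2 hα.2)
  refine deriv_tconv_nonpos_of_isMin ht ?_ (fun s hs => ?_) (fun a ha b _ hab => ?_) hv hd hmin hvt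
  · exact (intervalIntegral.intervalIntegrable_rpow' (neg_lt_neg hα.2)).div_const _
  · exact div_nonneg (Real.rpow_nonneg (le_of_lt hs) _) hΓ.le
  · exact div_le_div_of_nonneg_right
      (Real.rpow_le_rpow_of_nonpos ha hab (neg_nonpos.2 hα.1)) hΓ.le

end TimeConvolution

section SingularIntegral

variable {E : Type*} [NormedAddCommGroup E] [NormedSpace ℝ E]

lemma sub_isBigO_norm_rpow_two_of_contDiffAt {F : Type*} [NormedAddCommGroup F] [NormedSpace ℝ F]
    {v : E → F} {x : E} (hv : ContDiffAt ℝ 2 v x) (hcrit : fderiv ℝ v x = 0) :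
    (v · - v x) =O[𝓝 x] (‖· - x‖ ^ (2 : ℝ)) := by
  have hdiff : ∀ᶠ y in 𝓝 x, DifferentiableAt ℝ v y :=
    (hv.eventually (by simp)).mono fun y hy => hy.differentiableAt two_ne_zero
  have hfderiv : DifferentiableAt ℝ (fderiv ℝ v) x :=
    (hv.fderiv_right (m := 1) (by norm_num)).differentiableAt one_ne_zero
  have hlip : fderiv ℝ v =O[𝓝 x] (‖· - x‖ ^ (1 : ℝ)) := by
    simpa [hcrit] using hfderiv.isBigO_sub.norm_right
  convert sub_isBigO_norm_rpow_add_one_of_fderiv zero_le_one hdiff hlip using 3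
  norm_num

variable [FiniteDimensional ℝ E] [MeasurableSpace E] [BorelSpace E]
  {μ : Measure E} [μ.IsAddHaarMeasure]

open Module

lemma integrableOn_compl_ball_div_norm_rpow {g : E → ℝ} {M p r : ℝ}
    (hg : AEStronglyMeasurable g μ) (hgM : ∀ z, ‖g z‖ ≤ M) (hr : 0 < r) (hp : finrank ℝ E < p) :
    IntegrableOn (fun z => g z / ‖z‖ ^ p) (Metric.ball 0 r)ᶜ μ := by
  have hp_pos : 0 < p := (Nat.cast_nonneg _).trans_lt hp
  have hnorm : AEStronglyMeasurable (fun z : E => ‖z‖ ^ p) μ :=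
    (measurable_norm.pow_const p).aestronglyMeasurable
  refine (((integrable_one_add_norm hp).const_mul (M * (1 / r + 1) ^ p)).integrableOn).mono'
    (hg.div₀ hnorm).restrict ((ae_restrict_iff' Metric.isOpen_ball.measurableSet.compl).2 <|
      .of_forall fun z hz => ?_)
  have hrz : r ≤ ‖z‖ := by simpa using hz
  have hz_pos : 0 < ‖z‖ := hr.trans_le hrz
  have hcompare : (1 + ‖z‖) ^ p ≤ (1 / r + 1) ^ p * ‖z‖ ^ p := by
    rw [← Real.mul_rpow (by positivity) hz_pos.le]
    refine Real.rpow_le_rpow (by positivity) ?_ hp_pos.le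
    have : 1 ≤ ‖z‖ / r := (one_le_div hr).2 hrz
    rw [add_mul, one_mul, one_div_mul_eq_div]
    gcongr
  have hM : 0 ≤ M := (norm_nonneg _).trans (hgM z)
  calc ‖g z / ‖z‖ ^ p‖ = ‖g z‖ / ‖z‖ ^ p := by
        rw [norm_div, Real.norm_of_nonneg (by positivity : 0 ≤ ‖z‖ ^ p)]
    _ ≤ M / ‖z‖ ^ p := by gcongr; exact hgM z
    _ ≤ M * (1 / r + 1) ^ p * (1 + ‖z‖) ^ (-p) := by
        rw [Real.rpow_neg (by positivity), ← div_eq_mul_inv, div_le_div_iff₀ (by positivity)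
          (by positivity), mul_assoc]
        exact mul_le_mul_of_nonneg_left hcompare hM

variable [Nontrivial E]

lemma exists_integrableOn_ball_div_norm_rpow {g : E → ℝ} {p q : ℝ}
    (hg : AEStronglyMeasurable g μ) (hgO : g =O[𝓝 0] (‖·‖ ^ q)) (hp : p ≠ 0)
    (hpq : p < finrank ℝ E + q) :
    ∃ r > 0, IntegrableOn (fun z => g z / ‖z‖ ^ p) (Metric.ball 0 r) μ := by
  obtain ⟨C, hC_nonneg, hC⟩ := hgO.exists_nonneg
  obtain ⟨r, hr, hball⟩ := Metric.eventually_nhds_iff_ball.1 hC.bound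
  have hnorm : AEStronglyMeasurable (fun z : E => ‖z‖ ^ p) μ :=
    (measurable_norm.pow_const p).aestronglyMeasurable
  refine ⟨r, hr, integrableOn_ball_of_norm_le_rpow (C := C) (α := p - q) finrank_pos
    (by linarith) ((ae_restrict_iff' Metric.isOpen_ball.measurableSet).2 <|
      .of_forall fun z hz => ?_) (hg.div₀ hnorm)⟩
  rcases eq_or_ne z 0 with rfl | hz0
  · simpa [Real.zero_rpow hp] using mul_nonneg hC_nonneg (Real.rpow_nonneg le_rfl _)
  · have hz_pos : 0 < ‖z‖ := norm_pos_iff.2 hz0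
    rw [norm_div, Real.norm_of_nonneg (by positivity : 0 ≤ ‖z‖ ^ p), neg_sub,
      Real.rpow_sub hz_pos, ← mul_div_assoc]
    gcongr
    simpa [Real.norm_of_nonneg (by positivity : 0 ≤ ‖z‖ ^ q)] using hball z hz

lemma integrable_div_norm_rpow {g : E → ℝ} {M p q : ℝ} (hg : AEStronglyMeasurable g μ)
    (hgM : ∀ z, ‖g z‖ ≤ M) (hgO : g =O[𝓝 0] (‖·‖ ^ q))
    (hp : finrank ℝ E < p) (hpq : p < finrank ℝ E + q) :
    Integrable (fun z => g z / ‖z‖ ^ p) μ := by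
  obtain ⟨r, hr, hnear⟩ := exists_integrableOn_ball_div_norm_rpow hg hgO
    ((Nat.cast_nonneg _).trans_lt hp).ne' hpq
  rw [← integrableOn_univ, ← union_compl_self (Metric.ball (0 : E) r)]
  exact hnear.union (integrableOn_compl_ball_div_norm_rpow hg hgM hr hp)

lemma integrable_sub_div_norm_sub_rpow {v : E → ℝ} {x : E} {M p : ℝ} (hv : Continuous v)
    (hvM : ∀ y, ‖v y‖ ≤ M) (hv2 : ContDiffAt ℝ 2 v x) (hcrit : fderiv ℝ v x = 0)
    (hp : finrank ℝ E < p) (hp2 : p < finrank ℝ E + 2) :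
    Integrable (fun y => (v x - v y) / ‖x - y‖ ^ p) μ := by
  have hO : (fun z => v x - v (x - z)) =O[𝓝 0] (‖·‖ ^ (2 : ℝ)) := by
    have hshift : Tendsto (fun z => x - z) (𝓝 0) (𝓝 x) := by
      have : Continuous fun z => x - z := by fun_prop
      simpa using this.tendsto 0
    refine ((sub_isBigO_norm_rpow_two_of_contDiffAt hv2 hcrit).comp_tendsto hshift).neg_left.congr
      (fun z => by simp) fun z => by simp
  have hint : Integrable (fun z => (v x - v (x - z)) / ‖z‖ ^ p) μ :=
    integrable_div_norm_rpow (M := M + M) (by fun_prop)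
      (fun z => (norm_sub_le _ _).trans (add_le_add (hvM _) (hvM _))) hO hp hp2
  simpa using hint.comp_sub_left x

end SingularIntegral

section FractionalLaplacian

variable {N : ℕ} {β : ℝ} {v : EuclideanSpace ℝ (Fin N) → ℝ} {x : EuclideanSpace ℝ (Fin N)}

lemma fracLapConst_pos (N : ℕ) (hβ : β ∈ Ioo (0 : ℝ) 1) : 0 < fracLapConst N β := by
  have hβ_pos : 0 < β := hβ.1
  have hβ_lt : 0 < 1 - β := sub_pos.2 hβ.2
  unfold fracLapConst
  positivity

theorem fracLap_neg_of_isMin {M : ℝ} (hN : 1 ≤ N) (hβ : β ∈ Ioo (0 : ℝ) 1) (hv : Continuous v)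
    (hvM : ∀ y, ‖v y‖ ≤ M) (hv2 : ContDiffAt ℝ 2 v x) (hmin : ∀ y, v x ≤ v y)
    (hlt : ∃ y, v x < v y) : fracLap N β v x < 0 := by
  have : Nonempty (Fin N) := ⟨⟨0, hN⟩⟩
  have hcrit : fderiv ℝ v x = 0 := IsLocalMin.fderiv_eq_zero (.of_forall hmin)
  have hint : Integrable fun y => (v x - v y) / ‖x - y‖ ^ ((N : ℝ) + 2 * β) :=
    integrable_sub_div_norm_sub_rpow hv hvM hv2 hcrit
      (by simpa using hβ.1) (by simpa using hβ.2)
  have hsupport : {y | v x < v y} ⊆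
      Function.support fun y => -((v x - v y) / ‖x - y‖ ^ ((N : ℝ) + 2 * β)) := by
    intro y hy
    have hxy : x - y ≠ 0 := sub_ne_zero.2 fun h => (h ▸ hy : v x < v x).false
    exact neg_ne_zero.2 (div_ne_zero (sub_neg.2 hy).ne
      (Real.rpow_pos_of_pos (norm_pos_iff.2 hxy) _).ne')
  have hpos : 0 < ∫ y, -((v x - v y) / ‖x - y‖ ^ ((N : ℝ) + 2 * β)) := by
    refine (integral_pos_iff_support_of_nonneg (fun y => ?_) hint.neg).2 ?_
    · exact neg_nonneg.2
        (div_nonpos_of_nonpos_of_nonneg (sub_nonpos.2 (hmin y)) (by positivity))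
    · exact ((isOpen_lt continuous_const hv).measure_pos volume hlt).trans_le
        (measure_mono hsupport)
  rw [integral_neg] at hpos
  exact mul_neg_of_pos_of_neg (fracLapConst_pos N hβ) (neg_pos.1 hpos)

lemma continuous_of_continuousOn_closure_of_eq_zero {X : Type*} [TopologicalSpace X] {Ω : Set X}
    {w : X → ℝ} (hΩ : IsOpen Ω) (hw : ContinuousOn w (closure Ω)) (hw0 : ∀ y ∉ Ω, w y = 0) :
    Continuous w := by
  have hcompl : ContinuousOn w Ωᶜ := continuousOn_const.congr hw0
  rw [← continuousOn_univ]
  exact (hw.union_of_isClosed hcompl isClosed_closure hΩ.isClosed_compl).mono fun y _ =>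
    (em (y ∈ Ω)).imp (fun hy => subset_closure hy) id

theorem fracLap_neg_of_isMin_of_eq_zero_outside {Ω : Set (EuclideanSpace ℝ (Fin N))} (hN : 1 ≤ N)
    (hβ : β ∈ Ioo (0 : ℝ) 1) (hΩo : IsOpen Ω) (hΩb : Bornology.IsBounded Ω)
    (hv : ContinuousOn v (closure Ω)) (hv0 : ∀ y ∉ Ω, v y = 0) (hv2 : ContDiffAt ℝ 2 v x)
    (hmin : ∀ y, v x ≤ v y) (hneg : v x < 0) : fracLap N β v x < 0 := by
  have : Nonempty (Fin N) := ⟨⟨0, hN⟩⟩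
  have hcont : Continuous v := continuous_of_continuousOn_closure_of_eq_zero hΩo hv hv0
  have hcompact : HasCompactSupport v := .intro hΩb.isCompact_closure fun y hy =>
    hv0 y fun hyΩ => hy (subset_closure hyΩ)
  obtain ⟨M, hM⟩ := hcont.bounded_above_of_compact_support hcompact
  obtain ⟨y, hy⟩ := (ne_univ_iff_exists_notMem _).1 hΩb.isCompact_closure.ne_univ
  exact fracLap_neg_of_isMin hN hβ hcont hM hv2 hmin
    ⟨y, hneg.trans_eq (hv0 y fun hyΩ => hy (subset_closure hyΩ)).symm⟩

end FractionalLaplacian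

lemma exists_negative_min {X : Type*} [TopologicalSpace X] {Ω : Set X} {S : ℝ} {u : X → ℝ → ℝ}
    (hΩ : IsCompact (closure Ω))
    (hc : ContinuousOn (fun p : X × ℝ => u p.1 p.2) (closure Ω ×ˢ Icc 0 S))
    (hext : ∀ x ∉ Ω, ∀ t ∈ Icc 0 S, 0 ≤ u x t) (hinit : ∀ x ∈ Ω, 0 ≤ u x 0)
    (hneg : ∃ x, ∃ t ∈ Icc 0 S, u x t < 0) :
    ∃ x₀ ∈ Ω, ∃ t₀ ∈ Ioc 0 S, u x₀ t₀ < 0 ∧ ∀ y, ∀ s ∈ Icc 0 S, u x₀ t₀ ≤ u y s := by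
  obtain ⟨x, t, ht, hxt⟩ := hneg
  have mem_of_neg : ∀ y, ∀ s ∈ Icc 0 S, u y s < 0 → y ∈ Ω := fun y s hs hys =>
    by_contra fun hy => (hext y hy s hs).not_gt hys
  obtain ⟨⟨x₀, t₀⟩, ⟨-, ht₀⟩, hmin⟩ := (hΩ.prod isCompact_Icc).exists_isMinOn
    ⟨(x, t), subset_closure (mem_of_neg x t ht hxt), ht⟩ hc
  have hmin_closure : ∀ y ∈ closure Ω, ∀ s ∈ Icc 0 S, u x₀ t₀ ≤ u y s := fun y hy s hs =>
    hmin (mk_mem_prod hy hs)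
  have hneg₀ : u x₀ t₀ < 0 :=
    (hmin_closure x (subset_closure (mem_of_neg x t ht hxt)) t ht).trans_lt hxt
  have hx₀ : x₀ ∈ Ω := mem_of_neg x₀ t₀ ht₀ hneg₀
  have ht₀_ne : t₀ ≠ 0 := by
    rintro rfl
    exact (hinit x₀ hx₀).not_gt hneg₀
  refine ⟨x₀, hx₀, t₀, ⟨ht₀.1.lt_of_ne' ht₀_ne, ht₀.2⟩, hneg₀, fun y s hs => ?_⟩
  by_cases hy : y ∈ Ω
  · exact hmin_closure y (subset_closure hy) s hs
  · exact hneg₀.le.trans (hext y hy s hs)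

lemma forall_Icc_nonneg_of_forall_Ico {g : ℝ → ℝ} {a b : ℝ} (hab : a < b)
    (hg : ContinuousOn g (Icc a b)) (hnonneg : ∀ t ∈ Ico a b, 0 ≤ g t) :
    ∀ t ∈ Icc a b, 0 ≤ g t := by
  rw [← closure_Ico hab.ne] at hg ⊢
  exact le_on_closure hnonneg continuousOn_const hg

theorem classical_solution_nonneg_general {N : ℕ} (hN : 1 ≤ N) {α β T : ℝ}
    (hα : α ∈ Ico (0 : ℝ) 1) (hβ : β ∈ Ioo (0 : ℝ) 1) (hT : 0 < T)
    {Ω : Set (EuclideanSpace ℝ (Fin N))} (hΩo : IsOpen Ω) (hΩb : Bornology.IsBounded Ω)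
    {u : EuclideanSpace ℝ (Fin N) → ℝ → ℝ} {u0 : EuclideanSpace ℝ (Fin N) → ℝ}
    (hx : ∀ t ∈ Ioo 0 T, ContDiffOn ℝ 2 (fun x => u x t) Ω)
    (ht : ∀ x ∈ Ω, DifferentiableOn ℝ (u x) (Ioo 0 T))
    (hc : ContinuousOn (fun p : EuclideanSpace ℝ (Fin N) × ℝ => u p.1 p.2)
      (closure Ω ×ˢ Icc 0 T))
    (hext : ∀ x ∉ Ω, ∀ t, 0 ≤ t → u x t = 0)
    (hinit : ∀ x ∈ Ω, u x 0 = u0 x) (hu0 : ∀ x ∈ Ω, 0 ≤ u0 x)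
    (hsuper : ∀ x ∈ Ω, ∀ t ∈ Ioo 0 T,
      0 ≤ riemannLiouville α (fun s => u x s - u0 x) t + fracLap N β (fun y => u y t) x) :
    ∀ x ∈ closure Ω, ∀ t ∈ Icc 0 T, 0 ≤ u x t := by
  have hc_time : ∀ x ∈ closure Ω, ContinuousOn (u x) (Icc 0 T) := fun x hxΩ =>
    hc.comp (f := fun s : ℝ => (x, s)) (by fun_prop) fun s hs => ⟨hxΩ, hs⟩
  have hc_space : ∀ t ∈ Icc 0 T, ContinuousOn (fun y => u y t) (closure Ω) := fun t htT =>
    hc.comp (f := fun y => (y, t)) (by fun_prop) fun y hy => ⟨hy, htT⟩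
  refine fun x hxΩ => forall_Icc_nonneg_of_forall_Ico hT (hc_time x hxΩ) fun t htT => ?_
  by_contra! hneg
  obtain ⟨x₀, hx₀, t₀, ht₀, hneg₀, hmin⟩ := exists_negative_min hΩb.isCompact_closure
    (hc.mono (prod_mono_right (Icc_subset_Icc_right htT.2.le)))
    (fun y hy s hs => (hext y hy s hs.1).ge) (fun y hy => (hu0 y hy).trans_eq (hinit y hy).symm)
    ⟨x, t, ⟨htT.1, le_rfl⟩, hneg⟩
  have ht₀T : t₀ ∈ Ioo 0 T := ⟨ht₀.1, ht₀.2.trans_lt htT.2⟩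
  have htime : riemannLiouville α (fun s => u x₀ s - u0 x₀) t₀ ≤ 0 :=
    riemannLiouville_nonpos_of_isMin hα ht₀.1
      (((hc_time x₀ (subset_closure hx₀)).mono (Icc_subset_Icc_right ht₀T.2.le)).fun_sub
        continuousOn_const)
      (((ht x₀ hx₀).differentiableAt (Ioo_mem_nhds ht₀T.1 ht₀T.2)).sub_const
        _).differentiableWithinAt
      (fun s hs => sub_le_sub_right (hmin x₀ s ⟨hs.1, hs.2.trans ht₀.2⟩) _)
      (sub_nonpos.2 (hneg₀.le.trans (hu0 x₀ hx₀)))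
  have hspace : fracLap N β (fun y => u y t₀) x₀ < 0 :=
    fracLap_neg_of_isMin_of_eq_zero_outside hN hβ hΩo hΩb (hc_space t₀ ⟨ht₀.1.le, ht₀T.2.le⟩)
      (fun y hy => hext y hy t₀ ht₀.1.le) ((hx t₀ ht₀T).contDiffAt (hΩo.mem_nhds hx₀))
      (fun y => hmin y t₀ ⟨ht₀.1.le, ht₀.2⟩) hneg₀
  exact (hsuper x₀ hx₀ t₀ ht₀T).not_gt (add_neg_of_nonpos_of_neg htime hspace)

/-- Maximum principle (nonnegativity) for classical solutions of the
time-space fractional diffusion equation. -/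
theorem classical_solution_nonneg (N : ℕ) (hN : 1 ≤ N) (α β T : ℝ)
    (hα : α ∈ Ioo (0:ℝ) 1) (hβ : β ∈ Ioo (0:ℝ) 1) (hT : 0 < T)
    (Ω : Set (EuclideanSpace ℝ (Fin N)))
    (hΩo : IsOpen Ω) (hΩc : IsConnected Ω) (hΩb : Bornology.IsBounded Ω)
    (u : EuclideanSpace ℝ (Fin N) → ℝ → ℝ)
    (u0 : EuclideanSpace ℝ (Fin N) → ℝ)
    (f : EuclideanSpace ℝ (Fin N) → ℝ → ℝ)
    -- u is C² in x on Ω for each t ∈ (0,T)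
    (hx : ∀ t ∈ Ioo 0 T, ContDiffOn ℝ 2 (fun x => u x t) Ω)
    -- u is C¹ in t on (0,T) for each x ∈ Ω
    (ht : ∀ x ∈ Ω, ContDiffOn ℝ 1 (u x) (Ioo 0 T))
    -- u is continuous on cl(Ω) × [0,T]
    (hc : ContinuousOn (fun p : EuclideanSpace ℝ (Fin N) × ℝ => u p.1 p.2)
      (closure Ω ×ˢ Icc 0 T))
    -- zero exterior condition for t ≥ 0
    (hext : ∀ x ∉ Ω, ∀ t, 0 ≤ t → u x t = 0)
    -- initial condition
    (hinit : ∀ x ∈ Ω, u x 0 = u0 x)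
    (hu0 : ∀ x ∈ Ω, 0 ≤ u0 x)
    (hf : ∀ x ∈ closure Ω, ∀ t ∈ Icc 0 T, 0 ≤ f x t)
    -- the equation in Ω × (0,T)
    (heq : ∀ x ∈ Ω, ∀ t ∈ Ioo 0 T,
      riemannLiouville α (fun s => u x s - u0 x) t
        + fracLap N β (fun y => u y t) x = f x t) :
    ∀ x ∈ closure Ω, ∀ t ∈ Icc 0 T, 0 ≤ u x t :=
  classical_solution_nonneg_general hN ⟨hα.1.le, hα.2⟩ hβ hT hΩo hΩb hx
    (fun x hxΩ => (ht x hxΩ).differentiableOn one_ne_zero) hc hext hinit hu0 fun x hxΩ t htT =>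
      (hf x (subset_closure hxΩ) t (Ioo_subset_Icc_self htT)).trans_eq (heq x hxΩ t htT).symm
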